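/- Let W₀, W₁, Z, Z₀, Z₁ be nonnegative random variables on a probability space (Ω, F, P) such that: E(W₀) = E(W₁) = 1 and E(Z) = 1; the pairs (W₀, Z₀) and (W₁, Z₁) have the same joint distribution; Z₀ and Z₁ each have the same distribution as Z; for each i ∈ {0,1}, W_i is independent of Z_i; and almost surely 2Z = W₀Z₀ + W₁Z₁. Define a measure ℚ on Ω × {0,1} (product σ-algebra, with the discrete σ-algebra on {0,1}) by ℚ(E × {i}) = E(1_E · ½ W_i Z_i) for E ∈ F and i ∈ {0,1}, and define random variables on Ω × {0,1} by A(ω,i) = ½ W_i(ω), R(ω,i) = Z_i(ω) and R̃(ω,i) = Z(ω). Then: (a) ℚ is a probability measure; (b) R and R̃ have the same distribution under ℚ; (c) A and R are independent under ℚ. -/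

import Mathlib

open MeasureTheory ProbabilityTheory

/-!
Weighting an independent pair `(X, Y)` by the product `XY` makes its joint law the product of the
size-biased laws of `X` and `Y`. The slices of `ℚ` are such weightings of the pairs `(½ Wᵢ, Zᵢ)`,
and the second factor is always the size-biased law of `Z`; so the joint law of `(A, R)`, being the
sum over the slices, is again a product. On the other hand the slice densities `½ Wᵢ Zᵢ` add up to
`Z`, so `ℚ` projects to `P` weighted by `Z`, which has mass `E Z = 1` and under which `Z` has its
size-biased law too.
-/

section WithDensity

variable {Ω α β : Type*} [MeasurableSpace Ω] [MeasurableSpace α] [MeasurableSpace β]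
  {P : Measure Ω} {X : Ω → α} {Y : Ω → β} {f : α → ENNReal} {g : β → ENNReal}

lemma map_withDensity_comp (hX : Measurable X) (hf : Measurable f) :
    (P.withDensity fun ω => f (X ω)).map X = (P.map X).withDensity f := by
  ext s hs
  rw [Measure.map_apply hX hs, withDensity_apply _ (hX hs), withDensity_apply _ hs,
    setLIntegral_map hs hf hX]

lemma map_prodMk_withDensity_mul_of_indepFun [IsFiniteMeasure P] (hX : Measurable X)
    (hY : Measurable Y) (hf : Measurable f) (hg : Measurable g) (hXY : IndepFun X Y P) :
    (P.withDensity fun ω => f (X ω) * g (Y ω)).map (fun ω => (X ω, Y ω)) =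
      ((P.map X).withDensity f).prod ((P.map Y).withDensity g) := by
  rw [prod_withDensity hf hg,
    ← (indepFun_iff_map_prod_eq_prod_map_map hX.aemeasurable hY.aemeasurable).1 hXY,
    ← map_withDensity_comp (hX.prodMk hY) (by fun_prop)]

end WithDensity

section ProductLaw

variable {Ω α β : Type*} [MeasurableSpace Ω] [MeasurableSpace α] [MeasurableSpace β]
  {Q : Measure Ω} {X : Ω → α} {Y : Ω → β} {μ : Measure α} {ν : Measure β}

lemma map_fst_of_map_prodMk_eq_prod [IsProbabilityMeasure ν] (hY : Measurable Y)
    (hXY : Q.map (fun ω => (X ω, Y ω)) = μ.prod ν) : Q.map X = μ := by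
  rw [← Measure.fst_map_prodMk (X := X) hY, hXY, Measure.fst_prod]

lemma map_snd_of_map_prodMk_eq_prod [IsProbabilityMeasure Q] [IsProbabilityMeasure ν]
    (hX : Measurable X) (hY : Measurable Y)
    (hXY : Q.map (fun ω => (X ω, Y ω)) = μ.prod ν) : Q.map Y = ν := by
  have hμ : IsProbabilityMeasure μ := map_fst_of_map_prodMk_eq_prod hY hXY ▸
    Measure.isProbabilityMeasure_map hX.aemeasurable
  rw [← Measure.snd_map_prodMk (Y := Y) hX, hXY, Measure.snd_prod]

lemma indepFun_of_map_prodMk_eq_prod [IsProbabilityMeasure Q] [IsProbabilityMeasure ν]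
    (hX : Measurable X) (hY : Measurable Y)
    (hXY : Q.map (fun ω => (X ω, Y ω)) = μ.prod ν) : IndepFun X Y Q := by
  rw [indepFun_iff_map_prod_eq_prod_map_map hX.aemeasurable hY.aemeasurable, hXY,
    map_fst_of_map_prodMk_eq_prod hY hXY, map_snd_of_map_prodMk_eq_prod hX hY hXY]

end ProductLaw

section Slices

variable {Ω ι β : Type*} [MeasurableSpace Ω] [Countable ι] [MeasurableSpace ι]
  [MeasurableSingletonClass ι] [MeasurableSpace β] {Q : Measure (Ω × ι)} {ρ : ι → Measure Ω}

lemma eq_sum_map_prodMk_of_prod_singleton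
    (hQ : ∀ E, MeasurableSet E → ∀ i, Q (E ×ˢ {i}) = ρ i E) :
    Q = Measure.sum fun i => (ρ i).map fun ω => (ω, i) := by
  ext S hS
  have hslice (i : ι) : MeasurableSet ((fun ω => (ω, i)) ⁻¹' S) := measurable_prodMk_right hS
  have hunion : S = ⋃ i, ((fun ω => (ω, i)) ⁻¹' S) ×ˢ {i} := by ext; simp
  have hdisj : Pairwise (Function.onFun Disjoint fun i : ι => ((fun ω => (ω, i)) ⁻¹' S) ×ˢ {i}) :=
    fun _ _ hij => Set.disjoint_prod.2 (Or.inr (Set.disjoint_singleton.2 hij))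
  calc Q S = ∑' i, Q (((fun ω => (ω, i)) ⁻¹' S) ×ˢ {i}) := by
        conv_lhs => rw [hunion]
        exact measure_iUnion hdisj fun i => (hslice i).prod (measurableSet_singleton i)
    _ = ∑' i, (ρ i).map (fun ω => (ω, i)) S := by
        simp only [hQ _ (hslice _), Measure.map_apply measurable_prodMk_right hS]
    _ = Measure.sum (fun i => (ρ i).map fun ω => (ω, i)) S := (Measure.sum_apply _ hS).symm

lemma map_eq_sum_map_of_prod_singleton
    (hQ : ∀ E, MeasurableSet E → ∀ i, Q (E ×ˢ {i}) = ρ i E) {F : Ω × ι → β} (hF : Measurable F) :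
    Q.map F = Measure.sum fun i => (ρ i).map fun ω => F (ω, i) := by
  rw [eq_sum_map_prodMk_of_prod_singleton hQ, Measure.map_sum hF.aemeasurable]
  simp only [Measure.map_map hF measurable_prodMk_right, Function.comp_def]

end Slices

/-- The size-biased version of a law `μ` on `ℝ`, i.e. `x ∂μ(x)`, with the negative half-line
discarded. It is not normalised, so it is a probability measure exactly when the positive part has
mean `1`. -/
noncomputable def sizeBias (μ : Measure ℝ) : Measure ℝ :=
  μ.withDensity ENNReal.ofReal

instance (μ : Measure ℝ) [SFinite μ] : SFinite (sizeBias μ) :=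
  inferInstanceAs (SFinite (μ.withDensity ENNReal.ofReal))

section SizeBias

variable {Ω : Type*} [MeasurableSpace Ω] {P : Measure Ω}

lemma isProbabilityMeasure_sizeBias_map {Z : Ω → ℝ} (hZm : Measurable Z) (hZ0 : 0 ≤ᵐ[P] Z)
    (hEZ : ∫ ω, Z ω ∂P = 1) : IsProbabilityMeasure (sizeBias (P.map Z)) where
  measure_univ := by
    rw [sizeBias, withDensity_apply _ MeasurableSet.univ, Measure.restrict_univ,
      lintegral_map ENNReal.measurable_ofReal hZm,
      ← ofReal_integral_eq_lintegral_ofReal (integrable_of_integral_eq_one hEZ) hZ0, hEZ,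
      ENNReal.ofReal_one]

variable {ι : Type*} [Countable ι] {X A Z' : ι → Ω → ℝ} {Z : Ω → ℝ}

lemma sum_withDensity_ofReal_of_hasSum (hXm : ∀ i, Measurable (X i)) (hX0 : ∀ i, 0 ≤ᵐ[P] X i)
    (hXZ : ∀ᵐ ω ∂P, HasSum (fun i => X i ω) (Z ω)) :
    (Measure.sum fun i => P.withDensity fun ω => ENNReal.ofReal (X i ω)) =
      P.withDensity fun ω => ENNReal.ofReal (Z ω) := by
  rw [← withDensity_tsum fun i => (hXm i).ennreal_ofReal]
  refine withDensity_congr_ae ?_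
  filter_upwards [hXZ, ae_all_iff.2 hX0] with ω hω hω0
  rw [ENNReal.tsum_apply, ← hω.tsum_eq, ENNReal.ofReal_tsum_of_nonneg hω0 hω.summable]

variable [MeasurableSpace ι] [MeasurableSingletonClass ι] {Q : Measure (Ω × ι)}

lemma map_fst_eq_sizeBias_of_hasSum (hXm : ∀ i, Measurable (X i)) (hX0 : ∀ i, 0 ≤ᵐ[P] X i)
    (hZm : Measurable Z) (hXZ : ∀ᵐ ω ∂P, HasSum (fun i => X i ω) (Z ω))
    (hQ : ∀ E, MeasurableSet E → ∀ i,
      Q (E ×ˢ {i}) = P.withDensity (fun ω => ENNReal.ofReal (X i ω)) E) :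
    Q.map (fun p => Z p.1) = sizeBias (P.map Z) := by
  have hZfst : Measurable fun p : Ω × ι => Z p.1 := hZm.comp measurable_fst
  rw [map_eq_sum_map_of_prod_singleton hQ hZfst, ← Measure.map_sum hZm.aemeasurable,
    sum_withDensity_ofReal_of_hasSum hXm hX0 hXZ,
    map_withDensity_comp hZm ENNReal.measurable_ofReal, sizeBias]

lemma map_prodMk_eq_sum_sizeBias_prod_sizeBias [IsFiniteMeasure P]
    (hAm : ∀ i, Measurable (A i)) (hZ'm : ∀ i, Measurable (Z' i)) (hA0 : ∀ i, 0 ≤ᵐ[P] A i)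
    (hZd : ∀ i, P.map (Z' i) = P.map Z) (hInd : ∀ i, IndepFun (A i) (Z' i) P)
    (hQ : ∀ E, MeasurableSet E → ∀ i,
      Q (E ×ˢ {i}) = P.withDensity (fun ω => ENNReal.ofReal (A i ω * Z' i ω)) E) :
    Q.map (fun p => (A p.2 p.1, Z' p.2 p.1)) =
      (Measure.sum fun i => sizeBias (P.map (A i))).prod (sizeBias (P.map Z)) := by
  rw [map_eq_sum_map_of_prod_singleton hQ ((measurable_from_prod_countable_left hAm).prodMk
    (measurable_from_prod_countable_left hZ'm)), Measure.prod_sum_left]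
  congr with i : 1
  have hdensity : (fun ω => ENNReal.ofReal (A i ω * Z' i ω)) =ᵐ[P]
      fun ω => ENNReal.ofReal (A i ω) * ENNReal.ofReal (Z' i ω) :=
    (hA0 i).mono fun _ hω => ENNReal.ofReal_mul hω
  rw [withDensity_congr_ae hdensity, map_prodMk_withDensity_mul_of_indepFun (hAm i) (hZ'm i)
    ENNReal.measurable_ofReal ENNReal.measurable_ofReal (hInd i), hZd i, sizeBias, sizeBias]

end SizeBias

theorem stmt_14_general
    {Ω ι : Type*} [MeasurableSpace Ω] [Countable ι] [MeasurableSpace ι]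
    [MeasurableSingletonClass ι] (P : Measure Ω) [IsFiniteMeasure P]
    (A Z' : ι → Ω → ℝ) (Z : Ω → ℝ)
    (hAm : ∀ i, Measurable (A i)) (hZ'm : ∀ i, Measurable (Z' i)) (hZm : Measurable Z)
    (hA0 : ∀ i, 0 ≤ᵐ[P] A i) (hZ'0 : ∀ i, 0 ≤ᵐ[P] Z' i)
    (hEZ : ∫ ω, Z ω ∂P = 1) (hZd : ∀ i, P.map (Z' i) = P.map Z)
    (hInd : ∀ i, IndepFun (A i) (Z' i) P)
    (hAZ : ∀ᵐ ω ∂P, HasSum (fun i => A i ω * Z' i ω) (Z ω))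
    (Q : Measure (Ω × ι))
    (hQ : ∀ E : Set Ω, MeasurableSet E → ∀ i : ι,
      Q (E ×ˢ ({i} : Set ι)) = ∫⁻ ω in E, ENNReal.ofReal (A i ω * Z' i ω) ∂P) :
    IsProbabilityMeasure Q ∧
    Q.map (fun p : Ω × ι => Z' p.2 p.1) = Q.map (fun p : Ω × ι => Z p.1) ∧
    IndepFun (fun p : Ω × ι => A p.2 p.1) (fun p : Ω × ι => Z' p.2 p.1) Q := by
  have hAZ0 (i : ι) : 0 ≤ᵐ[P] fun ω => A i ω * Z' i ω := by
    filter_upwards [hA0 i, hZ'0 i] with ω using mul_nonneg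
  have hZ0 : 0 ≤ᵐ[P] Z := by
    filter_upwards [hAZ, ae_all_iff.2 hAZ0] with ω hω hω0 using hω.nonneg hω0
  have hslice : ∀ E, MeasurableSet E → ∀ i,
      Q (E ×ˢ {i}) = P.withDensity (fun ω => ENNReal.ofReal (A i ω * Z' i ω)) E :=
    fun E hE i => (hQ E hE i).trans (withDensity_apply _ hE).symm
  have hA : Measurable fun p : Ω × ι => A p.2 p.1 := measurable_from_prod_countable_left hAm
  have hR : Measurable fun p : Ω × ι => Z' p.2 p.1 := measurable_from_prod_countable_left hZ'm
  have hRtilde : Measurable fun p : Ω × ι => Z p.1 := hZm.comp measurable_fst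
  have hlawRtilde : Q.map (fun p => Z p.1) = sizeBias (P.map Z) :=
    map_fst_eq_sizeBias_of_hasSum (fun i => (hAm i).mul (hZ'm i)) hAZ0 hZm hAZ hslice
  have hlawAR := map_prodMk_eq_sum_sizeBias_prod_sizeBias hAm hZ'm hA0 hZd hInd hslice
  have hsizeBias := isProbabilityMeasure_sizeBias_map hZm hZ0 hEZ
  have hQprob : IsProbabilityMeasure Q :=
    (Measure.isProbabilityMeasure_map_iff hRtilde.aemeasurable).1 (hlawRtilde ▸ hsizeBias)
  exact ⟨hQprob, (map_snd_of_map_prodMk_eq_prod hA hR hlawAR).trans hlawRtilde.symm,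
    indepFun_of_map_prodMk_eq_prod hA hR hlawAR⟩

/-- The Peyrière measure associated with the decomposition `2Z = W₀Z₀ + W₁Z₁`:
if `ℚ` on `Ω × {0,1}` satisfies `ℚ(E × {i}) = E(1_E ½ W_i Z_i)`, then `ℚ` is a probability
measure, `R(ω,i) = Z_i(ω)` and `R̃(ω,i) = Z(ω)` have the same law under `ℚ`, and
`A(ω,i) = ½ W_i(ω)` and `R` are independent under `ℚ`. -/
theorem stmt_14
    {Ω : Type*} [MeasurableSpace Ω] (P : Measure Ω) [IsProbabilityMeasure P]
    (W Z' : Fin 2 → Ω → ℝ) (Z : Ω → ℝ)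
    (hWm : ∀ i, Measurable (W i)) (hZ'm : ∀ i, Measurable (Z' i)) (hZm : Measurable Z)
    (hW0 : ∀ i ω, 0 ≤ W i ω) (hZ'0 : ∀ i ω, 0 ≤ Z' i ω) (hZ0 : ∀ ω, 0 ≤ Z ω)
    (hEW : ∀ i, ∫ ω, W i ω ∂P = 1) (hEZ : ∫ ω, Z ω ∂P = 1)
    (hjoint : P.map (fun ω => (W 0 ω, Z' 0 ω)) = P.map (fun ω => (W 1 ω, Z' 1 ω)))
    (hZd : ∀ i, P.map (Z' i) = P.map Z)
    (hInd : ∀ i, IndepFun (W i) (Z' i) P)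
    (hEq : ∀ᵐ ω ∂P, 2 * Z ω = W 0 ω * Z' 0 ω + W 1 ω * Z' 1 ω)
    (Q : Measure (Ω × Fin 2))
    (hQ : ∀ E : Set Ω, MeasurableSet E → ∀ i : Fin 2,
      Q (E ×ˢ ({i} : Set (Fin 2))) = ∫⁻ ω in E, ENNReal.ofReal (2⁻¹ * W i ω * Z' i ω) ∂P) :
    IsProbabilityMeasure Q ∧
    Q.map (fun p : Ω × Fin 2 => Z' p.2 p.1) = Q.map (fun p : Ω × Fin 2 => Z p.1) ∧
    IndepFun (fun p : Ω × Fin 2 => 2⁻¹ * W p.2 p.1) (fun p : Ω × Fin 2 => Z' p.2 p.1) Q := by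
  have hZsum (ω : Ω) (hω : 2 * Z ω = W 0 ω * Z' 0 ω + W 1 ω * Z' 1 ω) :
      HasSum (fun i => 2⁻¹ * W i ω * Z' i ω) (Z ω) := by
    have hZ : Z ω = ∑ i, 2⁻¹ * W i ω * Z' i ω := by rw [Fin.sum_univ_two]; linarith
    exact hZ ▸ hasSum_fintype _
  exact stmt_14_general P (fun i ω => 2⁻¹ * W i ω) Z' Z (fun i => (hWm i).const_mul _) hZ'm hZm
    (fun i => .of_forall fun ω => mul_nonneg (by norm_num) (hW0 i ω))
    (fun i => .of_forall (hZ'0 i)) hEZ hZd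
    (fun i => (hInd i).comp (measurable_const_mul _) measurable_id) (hEq.mono hZsum) Q hQ
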